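/- arXiv:2501.09734 — 5 statements merged into one kernel-verified Lean document; each statement's English description precedes it below -/
import Mathlib

section
/- Let ε > 0, ε_S ∈ (0,1), S_max > 0, κ_T ≥ 0 and α > 0. Let f : ℝ^d → ℝ be twice continuously differentiable with L_H-Lipschitz continuous Hessian (L_H > 0), let x ∈ ℝ^d, S ∈ ℝ^{l×d} and ŝ ∈ ℝ^l. Let M = [∇f(x) | ∇²f(x)] ∈ ℝ^{d×(d+1)} be the matrix whose first column is ∇f(x) and whose remaining d columns form ∇²f(x). Assume: (a) ‖S M z‖² ≥ (1−ε_S)‖M z‖² for all z ∈ ℝ^{d+1}; (b) ‖S‖ ≤ S_max; (c) ‖S∇f(x) + S∇²f(x)Sᵀŝ + (1/α)·S Sᵀŝ·‖Sᵀŝ‖‖ ≤ κ_T·‖Sᵀŝ‖²; (d) ‖∇f(x + Sᵀŝ)‖ ≥ ε. Then ‖Sᵀŝ‖² ≥ (ε/2)·min{ 2/L_H, √(1−ε_S)/(S_max/α + κ_T) }. -/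
open scoped BigOperators NNReal
open MeasureTheory ProbabilityTheory

namespace RARC

noncomputable def enorm {n : ℕ} (v : Fin n → ℝ) : ℝ := Real.sqrt (∑ i, v i ^ 2)

noncomputable def opNorm {m n : ℕ} (S : Matrix (Fin m) (Fin n) ℝ) : ℝ :=
  sSup {c : ℝ | ∃ v : Fin n → ℝ, enorm v = 1 ∧ c = enorm (S.mulVec v)}

noncomputable def grad {n : ℕ} (f : (Fin n → ℝ) → ℝ) (x : Fin n → ℝ) : Fin n → ℝ :=
  fun i => fderiv ℝ f x (Pi.single i 1)

noncomputable def hess {n : ℕ} (f : (Fin n → ℝ) → ℝ) (x : Fin n → ℝ) :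
    Matrix (Fin n) (Fin n) ℝ :=
  Matrix.of fun i j =>
    fderiv ℝ (fun y => fderiv ℝ f y (Pi.single j 1)) x (Pi.single i 1)

noncomputable def qhat {d l : ℕ} (f : (Fin d → ℝ) → ℝ) (x : Fin d → ℝ)
    (S : Matrix (Fin l) (Fin d) ℝ) (s : Fin l → ℝ) : ℝ :=
  f x + (∑ i, S.mulVec (grad f x) i * s i)
    + (1/2) * (∑ i, s i * (S * hess f x * S.transpose).mulVec s i)

noncomputable def mhat {d l : ℕ} (f : (Fin d → ℝ) → ℝ) (x : Fin d → ℝ)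
    (S : Matrix (Fin l) (Fin d) ℝ) (α : ℝ) (s : Fin l → ℝ) : ℝ :=
  qhat f x S s + (1/(3*α)) * enorm (S.transpose.mulVec s) ^ 3

noncomputable def lambdaMin {n : ℕ} (A : Matrix (Fin n) (Fin n) ℝ) : ℝ :=
  sInf {t : ℝ | ∃ v : Fin n → ℝ, enorm v = 1 ∧ t = ∑ i, v i * A.mulVec v i}

def LipschitzHessian {n : ℕ} (f : (Fin n → ℝ) → ℝ) (L : ℝ) : Prop :=
  ∀ x y : Fin n → ℝ, opNorm (hess f y - hess f x) ≤ L * enorm (y - x)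

noncomputable def augM {d : ℕ} (f : (Fin d → ℝ) → ℝ) (x : Fin d → ℝ) :
    Matrix (Fin d) (Fin (d+1)) ℝ :=
  Matrix.of fun i j => Fin.cases (grad f x i) (fun j' => hess f x i j') j

noncomputable def gaussVec (l : ℕ) : Measure (Fin l → ℝ) :=
  Measure.pi fun _ => gaussianReal 0 (l : ℝ≥0)⁻¹

noncomputable def scaledGaussian (l d : ℕ) : Measure (Fin l → Fin d → ℝ) :=
  Measure.pi fun _ : Fin l => Measure.pi fun _ : Fin d => gaussianReal 0 (l : ℝ≥0)⁻¹



lemma enorm_eq_norm {n : ℕ} (v : Fin n → ℝ) : enorm v = ‖WithLp.toLp 2 v‖ := by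
  simp [enorm, EuclideanSpace.norm_eq]

lemma enorm_nonneg' {n : ℕ} (v : Fin n → ℝ) : 0 ≤ enorm v := Real.sqrt_nonneg _

lemma enorm_sq' {n : ℕ} (v : Fin n → ℝ) : enorm v ^ 2 = ∑ i, v i ^ 2 :=
  Real.sq_sqrt (Finset.sum_nonneg fun i _ => sq_nonneg _)

lemma enorm_add_le' {n : ℕ} (v w : Fin n → ℝ) : enorm (v + w) ≤ enorm v + enorm w := by
  simp only [enorm_eq_norm, WithLp.toLp_add]
  exact norm_add_le _ _

lemma enorm_smul' {n : ℕ} (c : ℝ) (v : Fin n → ℝ) : enorm (c • v) = |c| * enorm v := by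
  simp only [enorm_eq_norm, WithLp.toLp_smul, norm_smul, Real.norm_eq_abs]

lemma dot_le' {n : ℕ} (v w : Fin n → ℝ) : ∑ i, v i * w i ≤ enorm v * enorm w :=
  Real.sum_mul_le_sqrt_mul_sqrt _ _ _

lemma enorm_mulVec_le {m n : ℕ} (A : Matrix (Fin m) (Fin n) ℝ) (v : Fin n → ℝ) :
    enorm (A.mulVec v) ≤ opNorm A * enorm v := by
  have hbdd : BddAbove {c : ℝ | ∃ v : Fin n → ℝ, enorm v = 1 ∧ c = enorm (A.mulVec v)} := by
    refine ⟨‖(Matrix.toEuclideanLin A).toContinuousLinearMap‖, ?_⟩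
    rintro c ⟨u, hu, rfl⟩
    have := (Matrix.toEuclideanLin A).toContinuousLinearMap.le_opNorm (WithLp.toLp 2 u)
    rw [← enorm_eq_norm u, hu, mul_one] at this
    rw [enorm_eq_norm]
    exact this
  by_cases h : enorm v = 0
  · have hv : v = 0 := by
      rw [enorm_eq_norm, norm_eq_zero] at h
      simpa using h
    subst hv
    rw [h, Matrix.mulVec_zero]
    simp [enorm]
  · have hpos : 0 < enorm v := lt_of_le_of_ne (enorm_nonneg' v) (Ne.symm h)
    have h1 : enorm ((enorm v)⁻¹ • v) = 1 := by
      rw [enorm_smul', abs_of_pos (inv_pos.2 hpos), inv_mul_cancel₀ h]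
    have h2 : enorm (A.mulVec ((enorm v)⁻¹ • v)) ≤ opNorm A := le_csSup hbdd ⟨_, h1, rfl⟩
    rw [Matrix.mulVec_smul, enorm_smul', abs_of_pos (inv_pos.2 hpos), inv_mul_le_iff₀ hpos] at h2
    linarith

lemma fderiv_eq_grad {n : ℕ} (f : (Fin n → ℝ) → ℝ) (y w : Fin n → ℝ) :
    fderiv ℝ f y w = ∑ i, w i * grad f y i := by
  conv_lhs => rw [pi_eq_sum_univ' w]
  simp [map_sum, grad]

lemma hess_eq {n : ℕ} (f : (Fin n → ℝ) → ℝ) (hf : ContDiff ℝ 2 f) (y p w : Fin n → ℝ) :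
    fderiv ℝ (fderiv ℝ f) y p w = ∑ i, w i * (hess f y).mulVec p i := by
  have hd : DifferentiableAt ℝ (fderiv ℝ f) y :=
    ((hf.fderiv_right (m := 1) (by norm_num)).differentiable (by norm_num)) y
  have hs : fderiv ℝ (fderiv ℝ f) y p w = fderiv ℝ (fderiv ℝ f) y w p :=
    (hf.contDiffAt.isSymmSndFDerivAt (by simp)) p w
  have hh : ∀ i j, hess f y i j
      = fderiv ℝ (fderiv ℝ f) y (Pi.single i 1) (Pi.single j 1) := by
    intro i j
    simp only [hess, Matrix.of_apply]
    rw [fderiv_clm_apply hd (differentiableAt_const _)]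
    simp
  rw [hs]
  conv_lhs => rw [pi_eq_sum_univ' w]
  simp only [map_sum, map_smul, ContinuousLinearMap.sum_apply, ContinuousLinearMap.smul_apply,
    smul_eq_mul]
  refine Finset.sum_congr rfl fun i _ => ?_
  congr 1
  conv_lhs => rw [pi_eq_sum_univ' p]
  simp only [map_sum, map_smul, smul_eq_mul, Matrix.mulVec, dotProduct, hh]
  exact Finset.sum_congr rfl fun j _ => mul_comm _ _

lemma taylor_bound {n : ℕ} (f : (Fin n → ℝ) → ℝ) (hf : ContDiff ℝ 2 f) (L : ℝ)
    (hLip : LipschitzHessian f L) (x p w : Fin n → ℝ) :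
    ∑ i, w i * (grad f (x + p) - grad f x - (hess f x).mulVec p) i
      ≤ enorm w * (L / 2 * enorm p ^ 2) := by
  have hdiff : Differentiable ℝ (fderiv ℝ f) :=
    (hf.fderiv_right (m := 1) (by norm_num)).differentiable (by norm_num)
  let C := enorm w * (L * enorm p ^ 2)
  let φ : ℝ → ℝ := fun t => fderiv ℝ f (x + t • p) w
    - t * fderiv ℝ (fderiv ℝ f) x p w - C * t ^ 2 / 2
  have hφ : ∀ t, HasDerivAt φ (fderiv ℝ (fderiv ℝ f) (x + t • p) p w
      - fderiv ℝ (fderiv ℝ f) x p w - C * t) t := by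
    intro t
    have h1 : HasDerivAt (fun t : ℝ => x + t • p) p t := by
      simpa using ((hasDerivAt_id t).smul_const p).const_add x
    have h2 : HasDerivAt (fun t : ℝ => fderiv ℝ f (x + t • p))
        (fderiv ℝ (fderiv ℝ f) (x + t • p) p) t :=
      (hdiff (x + t • p)).hasFDerivAt.comp_hasDerivAt t h1
    have h3 := h2.clm_apply (hasDerivAt_const t w)
    have h4 := ((hasDerivAt_id t).mul_const (fderiv ℝ (fderiv ℝ f) x p w))
    have h5 := (((hasDerivAt_id t).pow 2).const_mul C).div_const 2
    refine ((h3.sub h4).sub h5).congr_deriv ?_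
    simp
    ring
  have hanti : AntitoneOn φ (Set.Icc 0 1) := by
    refine antitoneOn_of_deriv_nonpos (convex_Icc 0 1)
      (fun t _ => (hφ t).continuousAt.continuousWithinAt)
      (fun t _ => (hφ t).differentiableAt.differentiableWithinAt) ?_
    intro t ht
    rw [interior_Icc] at ht
    rw [(hφ t).deriv, hess_eq f hf, hess_eq f hf, ← Finset.sum_sub_distrib]
    have e : ∀ i, w i * (hess f (x + t • p)).mulVec p i - w i * (hess f x).mulVec p i
        = w i * (hess f (x + t • p) - hess f x).mulVec p i := by
      intro i
      rw [Matrix.sub_mulVec, Pi.sub_apply]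
      ring
    simp only [e]
    have b1 := dot_le' w ((hess f (x + t • p) - hess f x).mulVec p)
    have b2 := enorm_mulVec_le (hess f (x + t • p) - hess f x) p
    have b3 := hLip x (x + t • p)
    rw [add_sub_cancel_left, enorm_smul', abs_of_pos ht.1] at b3
    have b4 := mul_le_mul_of_nonneg_right b3 (enorm_nonneg' p)
    have b5 := mul_le_mul_of_nonneg_left (b2.trans b4) (enorm_nonneg' w)
    have : enorm w * (L * (t * enorm p) * enorm p) = C * t := by
      simp only [C]
      ring
    linarith
  have h01 := hanti (by simp) (by simp) zero_le_one
  simp only [φ, one_smul, zero_smul, add_zero] at h01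
  rw [hess_eq f hf, fderiv_eq_grad, fderiv_eq_grad] at h01
  simp only [Pi.sub_apply, mul_sub, Finset.sum_sub_distrib]
  have : enorm w * (L / 2 * enorm p ^ 2) = C / 2 := by
    simp only [C]
    ring
  linarith

lemma taylor_norm {n : ℕ} (f : (Fin n → ℝ) → ℝ) (hf : ContDiff ℝ 2 f) (L : ℝ) (hL : 0 < L)
    (hLip : LipschitzHessian f L) (x p : Fin n → ℝ) :
    enorm (grad f (x + p) - grad f x - (hess f x).mulVec p) ≤ L / 2 * enorm p ^ 2 := by
  have h := taylor_bound f hf L hLip x p (grad f (x + p) - grad f x - (hess f x).mulVec p)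
  set r := grad f (x + p) - grad f x - (hess f x).mulVec p
  have h2 : ∑ i, r i * r i = enorm r * enorm r := by
    rw [← sq, enorm_sq']
    simp [sq]
  rw [h2] at h
  rcases (enorm_nonneg' r).eq_or_lt with h0 | h0
  · rw [← h0]
    positivity
  · exact le_of_mul_le_mul_left h h0

theorem stmt2 {d l : ℕ} (ε ε_S S_max κ_T α L_H : ℝ)
    (hε : 0 < ε) (hεS : ε_S ∈ Set.Ioo (0:ℝ) 1) (hSmax : 0 < S_max) (hκT : 0 ≤ κ_T)
    (hα : 0 < α) (hLH : 0 < L_H)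
    (f : (Fin d → ℝ) → ℝ) (hf : ContDiff ℝ 2 f) (hLip : LipschitzHessian f L_H)
    (x : Fin d → ℝ) (S : Matrix (Fin l) (Fin d) ℝ) (sh : Fin l → ℝ)
    (ha : ∀ z : Fin (d+1) → ℝ,
      enorm (S.mulVec ((augM f x).mulVec z)) ^ 2
        ≥ (1 - ε_S) * enorm ((augM f x).mulVec z) ^ 2)
    (hb : opNorm S ≤ S_max)
    (hc : enorm (S.mulVec (grad f x) + (S * hess f x * S.transpose).mulVec sh
            + ((1/α) * enorm (S.transpose.mulVec sh)) • (S * S.transpose).mulVec sh)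
          ≤ κ_T * enorm (S.transpose.mulVec sh) ^ 2)
    (hd : enorm (grad f (x + S.transpose.mulVec sh)) ≥ ε) :
    enorm (S.transpose.mulVec sh) ^ 2
      ≥ (ε/2) * min (2 / L_H) (Real.sqrt (1 - ε_S) / (S_max / α + κ_T)) := by
  have hc' := hc
  set p := S.transpose.mulVec sh with hp
  have hz := ha (Fin.cons 1 p)
  have hM : (augM f x).mulVec (Fin.cons 1 p) = grad f x + (hess f x).mulVec p := by
    ext i
    simp [augM, Matrix.mulVec, dotProduct, Fin.sum_univ_succ]
  rw [hM] at hz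
  have e1 : (S * hess f x * S.transpose).mulVec sh = S.mulVec ((hess f x).mulVec p) := by
    simp [hp, Matrix.mulVec_mulVec, Matrix.mul_assoc]
  have e2 : (S * S.transpose).mulVec sh = S.mulVec p := by
    simp [hp, Matrix.mulVec_mulVec]
  rw [e1, e2, ← Matrix.mulVec_add] at hc
  have ht := taylor_norm f hf L_H hLH hLip x p
  set v := grad f x + (hess f x).mulVec p with hv
  have h1 : enorm (grad f (x + p)) ≤ enorm v + L_H / 2 * enorm p ^ 2 := by
    have := enorm_add_le' v (grad f (x + p) - grad f x - (hess f x).mulVec p)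
    have e : v + (grad f (x + p) - grad f x - (hess f x).mulVec p) = grad f (x + p) := by
      rw [hv]
      abel
    rw [e] at this
    linarith
  have hp0 := enorm_nonneg' p
  have h2 : enorm (S.mulVec v) ≤ (S_max / α + κ_T) * enorm p ^ 2 := by
    set c := (1 / α) * enorm p with hcc
    have hc0 : 0 ≤ c := by positivity
    have t := enorm_add_le' (S.mulVec v + c • S.mulVec p) ((-c) • S.mulVec p)
    have e : S.mulVec v + c • S.mulVec p + (-c) • S.mulVec p = S.mulVec v := by
      rw [neg_smul]
      abel
    rw [e, enorm_smul', abs_neg, abs_of_nonneg hc0] at t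
    have b := (enorm_mulVec_le S p).trans (mul_le_mul_of_nonneg_right hb hp0)
    have b2 := mul_le_mul_of_nonneg_left b hc0
    have e3 : c * (S_max * enorm p) = S_max / α * enorm p ^ 2 := by
      rw [hcc]
      ring
    linarith
  have hq : 0 < 1 - ε_S := by linarith [hεS.2]
  have hr : 0 < Real.sqrt (1 - ε_S) := Real.sqrt_pos.2 hq
  have h3 : Real.sqrt (1 - ε_S) * enorm v ≤ enorm (S.mulVec v) := by
    refine (pow_le_pow_iff_left₀ (by have := enorm_nonneg' v; positivity) (enorm_nonneg' _) two_ne_zero).1 ?_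
    rw [mul_pow, Real.sq_sqrt hq.le]
    exact hz
  have hK : 0 < S_max / α + κ_T := by positivity
  by_contra hcon
  push Not at hcon
  have m1 : enorm p ^ 2 < ε / 2 * (2 / L_H) :=
    hcon.trans_le (mul_le_mul_of_nonneg_left (min_le_left _ _) (by positivity))
  have m2 : enorm p ^ 2 < ε / 2 * (Real.sqrt (1 - ε_S) / (S_max / α + κ_T)) :=
    hcon.trans_le (mul_le_mul_of_nonneg_left (min_le_right _ _) (by positivity))
  have n1 : L_H / 2 * enorm p ^ 2 < ε / 2 := by
    have := mul_lt_mul_of_pos_left m1 (half_pos hLH)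
    have e : L_H / 2 * (ε / 2 * (2 / L_H)) = ε / 2 := by field_simp
    linarith
  have n2 : enorm v < ε / 2 := by
    have := mul_lt_mul_of_pos_left m2 hK
    have e : (S_max / α + κ_T) * (ε / 2 * (Real.sqrt (1 - ε_S) / (S_max / α + κ_T)))
        = Real.sqrt (1 - ε_S) * (ε / 2) := by
      generalize S_max / α + κ_T = K at hK
      field_simp
    exact lt_of_mul_lt_mul_left (by linarith) hr.le
  linarith


end RARC
end

section
/- Let l, d be positive integers, let S ∈ ℝ^{l×d} be a scaled Gaussian matrix, and let δ ∈ (0,1). Then with probability at least 1 − δ one has ‖S‖ ≤ 1 + √(d/l) + √(2·ln(1/δ)/l), where ‖S‖ is the ℓ₂ operator norm of S. -/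
open scoped BigOperators NNReal
open MeasureTheory ProbabilityTheory

namespace RARC

noncomputable def stdG (ι : Type) [Fintype ι] : Measure (ι → ℝ) :=
  Measure.pi fun _ => gaussianReal 0 1

instance (ι : Type) [Fintype ι] : IsProbabilityMeasure (stdG ι) := by
  unfold stdG; infer_instance

noncomputable def rho (ι : Type) [Fintype ι] (w : ι → ℝ) : ℝ := ∏ k, gaussianPDFReal 0 1 (w k)

lemma rho_nonneg {ι : Type} [Fintype ι] (w : ι → ℝ) : 0 ≤ rho ι w :=
  Finset.prod_nonneg fun _ _ => gaussianPDFReal_nonneg _ _ _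

lemma measurable_rho {ι : Type} [Fintype ι] : Measurable (rho ι) := by
  unfold rho
  exact Finset.measurable_prod _ fun k _ =>
    (measurable_gaussianPDFReal 0 1).comp (measurable_pi_apply k)

lemma stdG_eq (ι : Type) [Fintype ι] :
    stdG ι = volume.withDensity (fun w => ENNReal.ofReal (rho ι w)) := by
  unfold stdG
  refine Measure.pi_eq fun s hs => ?_
  rw [withDensity_apply _ (MeasurableSet.univ_pi hs), volume_pi, Measure.restrict_pi_pi]
  have hint : Integrable (rho ι) (Measure.pi fun i => (volume : Measure ℝ).restrict (s i)) :=
    Integrable.fintype_prod (fun i => (integrable_gaussianPDFReal 0 1).restrict)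
  rw [← ofReal_integral_eq_lintegral_ofReal hint (Filter.Eventually.of_forall rho_nonneg)]
  unfold rho
  rw [integral_fintype_prod_eq_prod (f := fun _ x => gaussianPDFReal 0 1 x),
    ENNReal.ofReal_prod_of_nonneg
      (fun i _ => integral_nonneg fun x => gaussianPDFReal_nonneg _ _ _)]
  refine Finset.prod_congr rfl fun i _ => ?_
  rw [gaussianReal_apply_eq_integral _ one_ne_zero]

lemma integral_stdG {ι : Type} [Fintype ι] (F : (ι → ℝ) → ℝ) :
    ∫ w, F w ∂(stdG ι) = ∫ w, F w * rho ι w := by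
  rw [stdG_eq, integral_withDensity_eq_integral_toReal_smul (by exact measurable_rho.ennreal_ofReal)
    (by simp)]
  refine integral_congr_ae (Filter.Eventually.of_forall fun w => ?_)
  simp [ENNReal.toReal_ofReal (rho_nonneg w), mul_comm]

lemma integrable_stdG {ι : Type} [Fintype ι] (F : (ι → ℝ) → ℝ) :
    Integrable F (stdG ι) ↔ Integrable (fun w => F w * rho ι w) := by
  rw [stdG_eq, integrable_withDensity_iff (by exact measurable_rho.ennreal_ofReal)
    (by simp)]
  simp [ENNReal.toReal_ofReal (rho_nonneg _)]

lemma rho_eq {ι : Type} [Fintype ι] (w : ι → ℝ) :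
    rho ι w = (∏ _k : ι, (√(2 * Real.pi))⁻¹) * Real.exp (- ((∑ k, w k ^ 2) / 2)) := by
  unfold rho gaussianPDFReal
  rw [Finset.prod_mul_distrib, ← Real.exp_sum]
  simp [Finset.sum_div, neg_div]

lemma rho_deriv {ι : Type} [Fintype ι] (w c : ι → ℝ) :
    HasLineDerivAt ℝ (rho ι) (-(∑ k, c k * w k) * rho ι w) w c := by
  unfold HasLineDerivAt
  have h2 : HasDerivAt (fun t : ℝ => - ((∑ k, (w + t • c) k ^ 2) / 2))
      (-(∑ k, c k * w k)) 0 := by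
    have : ∀ k ∈ (Finset.univ : Finset ι), HasDerivAt (fun t : ℝ => (w + t • c) k ^ 2) (2 * (c k * w k)) 0 := by
      intro k _
      have h : HasDerivAt (fun t : ℝ => w k + t * c k) (c k) 0 := by
        simpa using ((hasDerivAt_id (0:ℝ)).mul_const (c k)).const_add (w k)
      have := h.pow 2
      refine HasDerivAt.congr_deriv this ?_
      simp; ring
    have h3 := ((HasDerivAt.fun_sum this).div_const 2).neg
    refine HasDerivAt.congr_deriv h3 ?_
    rw [← Finset.mul_sum]; ring
  have h3 := h2.exp.const_mul (∏ _k : ι, (√(2 * Real.pi))⁻¹)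
  simp only [rho_eq]
  refine HasDerivAt.congr_deriv h3 ?_
  simp; ring

lemma stein {ι : Type} [Fintype ι] (F F' : (ι → ℝ) → ℝ) (c : ι → ℝ)
    (hF : Integrable F (stdG ι)) (hF' : Integrable F' (stdG ι))
    (hcF : Integrable (fun w => (∑ k, c k * w k) * F w) (stdG ι))
    (hd : ∀ w, HasLineDerivAt ℝ F (F' w) w c) :
    ∫ w, (∑ k, c k * w k) * F w ∂(stdG ι) = ∫ w, F' w ∂(stdG ι) := by
  rw [integral_stdG, integral_stdG]
  rw [integrable_stdG] at hF hF' hcF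
  have := integral_bilinear_hasLineDerivAt_right_eq_neg_left_of_integrable
    (μ := (volume : Measure (ι → ℝ))) (f := F) (f' := F') (g := rho ι)
    (g' := fun w => -(∑ k, c k * w k) * rho ι w) (v := c) (B := ContinuousLinearMap.mul ℝ ℝ)
    (by simpa using hF')
    (by
      refine hcF.neg.congr (Filter.Eventually.of_forall fun w => ?_)
      simp; ring) (by simpa using hF) (fun w _ => hd w) (fun w _ => rho_deriv w c)
  simp only [ContinuousLinearMap.mul_apply'] at this
  rw [← neg_inj, ← this, ← integral_neg]
  congr 1; ext w; ring

lemma integrable_expabs {ι : Type} [Fintype ι] (K : ℝ) :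
    Integrable (fun w : ι → ℝ => Real.exp (K * ∑ k, |w k|)) (stdG ι) := by
  have : (fun w : ι → ℝ => Real.exp (K * ∑ k, |w k|)) = fun w => ∏ k, Real.exp (K * |w k|) := by
    ext w; rw [← Real.exp_sum, Finset.mul_sum]
  rw [this]
  refine Integrable.fintype_prod (f := fun _ x => Real.exp (K * |x|)) fun _ => ?_
  exact integrable_exp_mul_abs (integrable_exp_mul_gaussianReal K)
    (integrable_exp_mul_gaussianReal (-K))

def lin {ι : Type} [Fintype ι] (c w : ι → ℝ) : ℝ := ∑ k, c k * w k

noncomputable def Zs {I : Type} [Fintype I] (β : ℝ) (x : I → ℝ) : ℝ := ∑ i, Real.exp (β * x i)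

section cmp
set_option linter.unusedSectionVars false
set_option linter.unusedVariables false
variable {I ι : Type} [Fintype I] [Fintype ι] [Nonempty I]

lemma Zs_pos (β : ℝ) (x : I → ℝ) : 0 < Zs β x :=
  Finset.sum_pos (fun _ _ => Real.exp_pos _) Finset.univ_nonempty

lemma exp_le_Zs (β : ℝ) (x : I → ℝ) (i : I) : Real.exp (β * x i) ≤ Zs β x :=
  Finset.single_le_sum (f := fun i => Real.exp (β * x i)) (fun _ _ => (Real.exp_pos _).le)
    (Finset.mem_univ i)

lemma deriv_Zs (β q : ℝ) (x : ℝ → I → ℝ) (m : I → ℝ) (t : ℝ)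
    (h : ∀ i, HasDerivAt (fun t => x t i) (m i) t) :
    HasDerivAt (fun t => Zs β (x t) ^ q)
      (∑ i, q * β * m i * (Real.exp (β * x t i) * Zs β (x t) ^ (q - 1))) t := by
  have h1 : HasDerivAt (fun t => Zs β (x t)) (∑ i, Real.exp (β * x t i) * (β * m i)) t := by
    unfold Zs
    exact HasDerivAt.fun_sum fun i _ => ((h i).const_mul β).exp
  refine (h1.rpow_const (Or.inl (Zs_pos β (x t)).ne')).congr_deriv ?_
  rw [Finset.sum_mul, Finset.sum_mul]
  exact Finset.sum_congr rfl fun i _ => by ring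

noncomputable def Gi (β q : ℝ) (x : I → ℝ) (i : I) : ℝ := Real.exp (β * x i) * Zs β x ^ (q - 1)

noncomputable def Gij (β q : ℝ) (x : I → ℝ) (i j : I) : ℝ :=
  Real.exp (β * x i) * (Real.exp (β * x j) * Zs β x ^ (q - 1 - 1))

lemma deriv_Gi (β q : ℝ) (x : ℝ → I → ℝ) (m : I → ℝ) (t : ℝ) (i : I)
    (h : ∀ i, HasDerivAt (fun t => x t i) (m i) t) :
    HasDerivAt (fun t => Gi β q (x t) i)
      (β * m i * Gi β q (x t) i + ∑ j, (q - 1) * β * m j * Gij β q (x t) i j) t := by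
  have h1 := (((h i).const_mul β).exp).mul (deriv_Zs β (q - 1) x m t h)
  refine HasDerivAt.congr_deriv h1 ?_
  unfold Gi Gij
  rw [Finset.mul_sum]
  congr 1
  · ring
  · exact Finset.sum_congr rfl fun j _ => by ring

lemma Gi_nonneg (β q : ℝ) (x : I → ℝ) (i : I) : 0 ≤ Gi β q x i :=
  mul_nonneg (Real.exp_pos _).le (Real.rpow_nonneg (Zs_pos _ _).le _)

lemma Gij_nonneg (β q : ℝ) (x : I → ℝ) (i j : I) : 0 ≤ Gij β q x i j :=
  mul_nonneg (Real.exp_pos _).le (mul_nonneg (Real.exp_pos _).le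
    (Real.rpow_nonneg (Zs_pos _ _).le _))

lemma Zs_mul_rpow (β q : ℝ) (x : I → ℝ) : Zs β x * Zs β x ^ (q - 1) = Zs β x ^ q := by
  rw [Real.rpow_sub_one (Zs_pos β x).ne']
  field_simp [(Zs_pos β x).ne']

lemma Gi_le (β q : ℝ) (x : I → ℝ) (i : I) : Gi β q x i ≤ Zs β x ^ q := by
  rw [← Zs_mul_rpow]
  exact mul_le_mul_of_nonneg_right (exp_le_Zs _ _ _) (Real.rpow_nonneg (Zs_pos _ _).le _)

lemma sum_Gi (β q : ℝ) (x : I → ℝ) : ∑ i, Gi β q x i = Zs β x ^ q := by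
  rw [← Zs_mul_rpow]
  unfold Gi
  rw [← Finset.sum_mul]; rfl

lemma sum_Gij (β q : ℝ) (x : I → ℝ) (i : I) : ∑ j, Gij β q x i j = Gi β q x i := by
  unfold Gij
  rw [← Finset.mul_sum, ← Finset.sum_mul]
  unfold Gi
  rw [← Zs_mul_rpow β (q - 1)]; rfl

lemma Gij_le (β q : ℝ) (x : I → ℝ) (i j : I) : Gij β q x i j ≤ Zs β x ^ q := by
  refine le_trans ?_ (Gi_le β q x i)
  rw [← sum_Gij]
  exact Finset.single_le_sum (f := fun j => Gij β q x i j) (fun _ _ => Gij_nonneg _ _ _ _ _)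
    (Finset.mem_univ j)

lemma DG_le (β p s : ℝ) (x : I → ℝ) (κ : I → ℝ) (i : I) (hβ : 0 ≤ β) (hs : 0 ≤ s) (hp : p ≤ 1)
    (hi : κ i = -1) (hκ : ∀ j, -1 ≤ κ j) :
    β * (s * κ i) * Gi β p x i + ∑ j, (p - 1) * β * (s * κ j) * Gij β p x i j
      ≤ -(p * β * s) * Gi β p x i := by
  have h1 : ∑ j, (p - 1) * β * (s * κ j) * Gij β p x i j ≤
      ∑ j, (1 - p) * β * s * Gij β p x i j := by
    refine Finset.sum_le_sum fun j _ => mul_le_mul_of_nonneg_right ?_ (Gij_nonneg _ _ _ _ _)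
    have := mul_nonneg (mul_nonneg (mul_nonneg (sub_nonneg.2 hp) hβ) hs)
      (by linarith [hκ j] : 0 ≤ κ j + 1)
    nlinarith
  rw [← Finset.mul_sum, sum_Gij] at h1
  rw [hi]
  linarith

lemma abs_lin_le (c w : ι → ℝ) (C : ℝ) (h : ∀ k, |c k| ≤ C) :
    |lin c w| ≤ C * ∑ k, |w k| := by
  unfold lin
  refine (Finset.abs_sum_le_sum_abs _ _).trans ?_
  rw [Finset.mul_sum]
  refine Finset.sum_le_sum fun k _ => ?_
  rw [abs_mul]
  exact mul_le_mul_of_nonneg_right (h k) (abs_nonneg _)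

lemma Zs_le (β p C : ℝ) (hβ : 0 ≤ β) (hp : 0 ≤ p) (c : I → ι → ℝ) (w : ι → ℝ)
    (h : ∀ i k, |c i k| ≤ C) :
    Zs β (fun i => lin (c i) w) ^ p ≤
      (Fintype.card I : ℝ) ^ p * Real.exp (p * β * C * ∑ k, |w k|) := by
  have h1 : Zs β (fun i => lin (c i) w) ≤ (Fintype.card I : ℝ) * Real.exp (β * C * ∑ k, |w k|) := by
    unfold Zs
    rw [← nsmul_eq_mul, ← Finset.card_univ]
    refine Finset.sum_le_card_nsmul _ _ _ fun i _ => ?_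
    refine Real.exp_le_exp.2 ?_
    rw [mul_assoc]
    exact mul_le_mul_of_nonneg_left ((le_abs_self _).trans (abs_lin_le _ _ _ (h i))) hβ
  refine (Real.rpow_le_rpow (Zs_pos _ _).le h1 hp).trans ?_
  rw [Real.mul_rpow (by positivity) (Real.exp_pos _).le, ← Real.exp_mul]
  refine le_of_eq ?_
  congr 2; ring

lemma continuous_lin (c : ι → ℝ) : Continuous (fun w => lin c w) := by
  unfold lin; fun_prop

lemma continuous_Zs (β q : ℝ) (c : I → ι → ℝ) :
    Continuous (fun w => Zs β (fun i => lin (c i) w) ^ q) := by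
  refine Continuous.rpow_const ?_ fun w => Or.inl (Zs_pos _ _).ne'
  unfold Zs lin; fun_prop

lemma continuous_Gi (β q : ℝ) (c : I → ι → ℝ) (i : I) :
    Continuous (fun w => Gi β q (fun i => lin (c i) w) i) := by
  unfold Gi
  refine Continuous.mul ?_ (continuous_Zs _ _ _)
  unfold lin; fun_prop

lemma continuous_Gij (β q : ℝ) (c : I → ι → ℝ) (i j : I) :
    Continuous (fun w => Gij β q (fun i => lin (c i) w) i j) := by
  unfold Gij
  refine Continuous.mul ?_ (Continuous.mul ?_ (continuous_Zs _ _ _))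
  all_goals unfold lin; fun_prop

lemma integrable_of_le (F : (ι → ℝ) → ℝ) (A K : ℝ) (hF : Continuous F)
    (h : ∀ w, |F w| ≤ A * Real.exp (K * ∑ k, |w k|)) : Integrable F (stdG ι) := by
  refine ((integrable_expabs K).const_mul A).mono' hF.aestronglyMeasurable
    (Filter.Eventually.of_forall fun w => ?_)
  simpa using h w

lemma exists_bound (c : I → ι → ℝ) : ∃ C, 0 ≤ C ∧ ∀ i k, |c i k| ≤ C := by
  refine ⟨∑ i, ∑ k, |c i k|, by positivity, fun i k => ?_⟩
  refine (Finset.single_le_sum (f := fun k => |c i k|) (fun _ _ => abs_nonneg _)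
    (Finset.mem_univ k)).trans ?_
  exact Finset.single_le_sum (f := fun i => ∑ k, |c i k|)
    (fun _ _ => by positivity) (Finset.mem_univ i)

lemma integrable_of_le_Zs (β p : ℝ) (hβ : 0 ≤ β) (hp : 0 ≤ p) (c : I → ι → ℝ)
    (F : (ι → ℝ) → ℝ) (hF : Continuous F)
    (h : ∀ w, |F w| ≤ Zs β (fun i => lin (c i) w) ^ p) : Integrable F (stdG ι) := by
  obtain ⟨C, -, hC⟩ := exists_bound c
  exact integrable_of_le F _ _ hF fun w => (h w).trans (Zs_le β p C hβ hp c w hC)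

lemma mul_le_exp' (C A K R x y : ℝ) (hA : 0 ≤ A) (hC : 0 ≤ C)
    (hx : |x| ≤ C * R) (hy : |y| ≤ A * Real.exp (K * R)) :
    |x * y| ≤ C * A * Real.exp ((K + 1) * R) := by
  rw [abs_mul]
  have h1 : |x| ≤ C * Real.exp R :=
    hx.trans (mul_le_mul_of_nonneg_left (by linarith [Real.add_one_le_exp R]) hC)
  refine (mul_le_mul h1 hy (abs_nonneg _) (by positivity)).trans (le_of_eq ?_)
  rw [add_mul, Real.exp_add, one_mul]; ring

/-- Stein for the interpolation -/
lemma stein_Gi (β p s : ℝ) (hβ : 0 ≤ β) (hp : 0 ≤ p) (hp1 : p ≤ 1) (hs : 0 ≤ s)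
    (c : I → ι → ℝ) (e : ι → ℝ) (κ : I → ℝ) (i : I)
    (he : ∀ j, lin (c j) e = s * κ j) (hi : κ i = -1) (hκ : ∀ j, -1 ≤ κ j) :
    ∫ w, lin e w * Gi β p (fun i => lin (c i) w) i ∂(stdG ι) ≤
      -(p * β * s) * ∫ w, Gi β p (fun i => lin (c i) w) i ∂(stdG ι) := by
  have hG : Integrable (fun w => Gi β p (fun i => lin (c i) w) i) (stdG ι) :=
    integrable_of_le_Zs β p hβ hp c _ (continuous_Gi _ _ _ _)
      fun w => by rw [abs_of_nonneg (Gi_nonneg _ _ _ _)]; exact Gi_le _ _ _ _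
  have hGij : ∀ j, Integrable (fun w => Gij β p (fun i => lin (c i) w) i j) (stdG ι) := fun j =>
    integrable_of_le_Zs β p hβ hp c _ (continuous_Gij _ _ _ _ _)
      fun w => by rw [abs_of_nonneg (Gij_nonneg _ _ _ _ _)]; exact Gij_le _ _ _ _ _
  have hD : Integrable (fun w => β * (s * κ i) * Gi β p (fun i => lin (c i) w) i +
      ∑ j, (p - 1) * β * (s * κ j) * Gij β p (fun i => lin (c i) w) i j) (stdG ι) :=
    (hG.const_mul _).add (integrable_finsetSum _ fun j _ => (hGij j).const_mul _)
  have hst := stein (fun w => Gi β p (fun i => lin (c i) w) i)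
    (fun w => β * (s * κ i) * Gi β p (fun i => lin (c i) w) i +
      ∑ j, (p - 1) * β * (s * κ j) * Gij β p (fun i => lin (c i) w) i j) e hG hD ?_ ?_
  · refine (le_of_eq hst).trans ?_
    rw [← integral_const_mul]
    exact integral_mono hD (hG.const_mul _) fun w => DG_le β p s _ κ i hβ hs hp1 hi hκ
  · obtain ⟨C, hC0, hC⟩ := exists_bound c
    obtain ⟨E, hE0, hE⟩ := exists_bound (fun _ : I => e)
    refine integrable_of_le _ (E * (Fintype.card I : ℝ) ^ p) (p * β * C + 1)
      (by exact (continuous_lin e).mul (continuous_Gi _ _ _ _)) fun w => ?_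
    refine mul_le_exp' _ _ _ _ _ _ (by positivity) hE0 (abs_lin_le e w E (hE i)) ?_
    rw [abs_of_nonneg (Gi_nonneg _ _ _ _)]
    exact (Gi_le _ _ _ _).trans (Zs_le β p C hβ hp c w hC)
  · intro w
    unfold HasLineDerivAt
    have hx : ∀ j, HasDerivAt (fun t : ℝ => lin (c j) (w + t • e)) (s * κ j) 0 := by
      intro j
      have : (fun t : ℝ => lin (c j) (w + t • e)) = fun t => lin (c j) w + t * lin (c j) e := by
        ext t
        simp only [lin, Pi.add_apply, Pi.smul_apply, smul_eq_mul, Finset.mul_sum,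
          ← Finset.sum_add_distrib]
        exact Finset.sum_congr rfl fun k _ => by ring
      rw [this, ← he]
      simpa using ((hasDerivAt_id (0:ℝ)).mul_const (lin (c j) e)).const_add (lin (c j) w)
    have := deriv_Gi β p (fun t j => lin (c j) (w + t • e)) (fun j => s * κ j) 0 i hx
    simpa using this

noncomputable def cth (a b : I → ι → ℝ) (θ : ℝ) (i : I) (k : ι) : ℝ :=
  Real.cos θ * b i k + Real.sin θ * a i k

lemma lin_add {ι : Type} [Fintype ι] (x y : ℝ) (a b w : ι → ℝ) :
    lin (fun k => x * b k + y * a k) w = x * lin b w + y * lin a w := by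
  simp only [lin, Finset.mul_sum, ← Finset.sum_add_distrib]
  exact Finset.sum_congr rfl fun k _ => by ring

lemma cth_le (a b : I → ι → ℝ) (M : ℝ) (ha : ∀ i k, |a i k| ≤ M) (hb : ∀ i k, |b i k| ≤ M)
    (x y : ℝ) (hx : |x| ≤ 1) (hy : |y| ≤ 1) (i : I) (k : ι) :
    |x * b i k + y * a i k| ≤ 2 * M := by
  refine (abs_add_le _ _).trans ?_
  rw [abs_mul, abs_mul]
  nlinarith [ha i k, hb i k, abs_nonneg (a i k), abs_nonneg (b i k), abs_nonneg x, abs_nonneg y]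

noncomputable def phi (β p : ℝ) (a b : I → ι → ℝ) (θ : ℝ) : ℝ :=
  ∫ w, Zs β (fun i => lin (cth a b θ i) w) ^ p ∂(stdG ι)

lemma phi_deriv (β p : ℝ) (hβ : 0 ≤ β) (hp : 0 ≤ p) (a b : I → ι → ℝ) (θ : ℝ) :
    HasDerivAt (phi β p a b)
      (∑ i, p * β * ∫ w, lin (cth (fun i k => - b i k) a θ i) w *
        Gi β p (fun i => lin (cth a b θ i) w) i ∂(stdG ι)) θ := by
  obtain ⟨Ma, hMa0, hMa⟩ := exists_bound a
  obtain ⟨Mb, hMb0, hMb⟩ := exists_bound b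
  set M := Ma + Mb with hM
  have ha : ∀ i k, |a i k| ≤ M := fun i k => (hMa i k).trans (by linarith)
  have hb : ∀ i k, |b i k| ≤ M := fun i k => (hMb i k).trans (by linarith)
  have hb' : ∀ i k, |- b i k| ≤ M := fun i k => by rw [abs_neg]; exact hb i k
  have hc : ∀ θ i k, |cth a b θ i k| ≤ 2 * M := fun θ =>
    cth_le a b M ha hb _ _ (Real.abs_cos_le_one θ) (Real.abs_sin_le_one θ)
  have hc' : ∀ θ i k, |cth (fun i k => - b i k) a θ i k| ≤ 2 * M := fun θ =>
    cth_le _ a M hb' ha _ _ (Real.abs_cos_le_one θ) (Real.abs_sin_le_one θ)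
  have hterm : ∀ θ w i, |lin (cth (fun i k => - b i k) a θ i) w *
        Gi β p (fun i => lin (cth a b θ i) w) i| ≤
      2 * M * (Fintype.card I : ℝ) ^ p * Real.exp ((p * β * (2 * M) + 1) * ∑ k, |w k|) := by
    intro θ w i
    refine mul_le_exp' _ _ _ _ _ _ (by positivity) (by positivity)
      (abs_lin_le _ w _ (hc' θ i)) ?_
    rw [abs_of_nonneg (Gi_nonneg _ _ _ _)]
    exact (Gi_le _ _ _ _).trans (Zs_le β p _ hβ hp _ w (hc θ))
  have hcont : ∀ θ i, Continuous fun w => lin (cth (fun i k => - b i k) a θ i) w *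
        Gi β p (fun i => lin (cth a b θ i) w) i := fun θ i =>
    (continuous_lin _).mul (continuous_Gi _ _ _ _)
  have hint : ∀ i, Integrable (fun w => lin (cth (fun i k => - b i k) a θ i) w *
        Gi β p (fun i => lin (cth a b θ i) w) i) (stdG ι) := fun i =>
    integrable_of_le _ _ _ (hcont θ i) fun w => hterm θ w i
  have key := hasDerivAt_integral_of_dominated_loc_of_deriv_le (μ := stdG ι) (x₀ := θ)
    (s := Set.univ) (F := fun θ w => Zs β (fun i => lin (cth a b θ i) w) ^ p)
    (F' := fun θ w => ∑ i, p * β * (lin (cth (fun i k => - b i k) a θ i) w *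
        Gi β p (fun i => lin (cth a b θ i) w) i))
    (bound := fun w => ∑ _i : I, p * β * (2 * M * (Fintype.card I : ℝ) ^ p *
      Real.exp ((p * β * (2 * M) + 1) * ∑ k, |w k|)))
    Filter.univ_mem
    (Filter.Eventually.of_forall fun θ => (continuous_Zs _ _ _).aestronglyMeasurable)
    (integrable_of_le_Zs β p hβ hp (cth a b θ) _ (continuous_Zs _ _ _) fun w => by
      rw [abs_of_nonneg (Real.rpow_nonneg (Zs_pos _ _).le _)])
    (by
      refine Continuous.aestronglyMeasurable ?_
      exact continuous_finsetSum _ fun i _ => continuous_const.mul (hcont θ i))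
    (Filter.Eventually.of_forall fun w θ _ => by
      rw [Real.norm_eq_abs]
      refine (Finset.abs_sum_le_sum_abs _ _).trans (Finset.sum_le_sum fun i _ => ?_)
      rw [abs_mul, abs_of_nonneg (mul_nonneg hp hβ)]
      exact mul_le_mul_of_nonneg_left (hterm θ w i) (mul_nonneg hp hβ))
    (integrable_finsetSum _ fun i _ => ((integrable_expabs _).const_mul _).const_mul _)
    (Filter.Eventually.of_forall fun w θ _ => by
      have hx : ∀ i, HasDerivAt (fun θ => lin (cth a b θ i) w)
          (lin (cth (fun i k => - b i k) a θ i) w) θ := by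
        intro i
        have e1 : ∀ θ, lin (cth a b θ i) w = Real.cos θ * lin (b i) w + Real.sin θ * lin (a i) w :=
          fun θ => lin_add _ _ _ _ _
        have e2 : lin (fun k => - b i k) w = - lin (b i) w := by simp [lin]
        have e3 : lin (cth (fun i k => - b i k) a θ i) w =
            - Real.sin θ * lin (b i) w + Real.cos θ * lin (a i) w := by
          have : lin (cth (fun i k => - b i k) a θ i) w = _ := lin_add _ _ _ _ _
          rw [this, e2]; ring
        simp only [e1]
        rw [e3]
        exact ((Real.hasDerivAt_cos θ).mul_const _).add ((Real.hasDerivAt_sin θ).mul_const _)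
      refine (deriv_Zs β p (fun θ i => lin (cth a b θ i) w) _ θ hx).congr_deriv ?_
      exact Finset.sum_congr rfl fun i _ => by unfold Gi; ring)
  refine key.2.congr_deriv ?_
  rw [integral_finsetSum _ fun i _ => (hint i).const_mul _]
  exact Finset.sum_congr rfl fun i _ => integral_const_mul _ _

lemma gcompare (β p : ℝ) (hβ : 0 ≤ β) (hp : 0 ≤ p) (hp1 : p ≤ 1) (a b : I → ι → ℝ)
    (hab : ∀ i j, lin (a i) (b j) = 0) (hii : ∀ i, lin (a i) (a i) - lin (b i) (b i) = -1)
    (hij : ∀ i j, -1 ≤ lin (a i) (a j) - lin (b i) (b j)) :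
    Real.exp ((p * β) ^ 2 / 2) * ∫ w, Zs β (fun i => lin (a i) w) ^ p ∂(stdG ι) ≤
      ∫ w, Zs β (fun i => lin (b i) w) ^ p ∂(stdG ι) := by
  have hba : ∀ i j, lin (b i) (a j) = 0 := fun i j => by
    rw [← hab j i]; unfold lin; exact Finset.sum_congr rfl fun k _ => mul_comm _ _
  set ψ : ℝ → ℝ := fun θ => Real.exp ((p * β) ^ 2 * Real.sin θ ^ 2 / 2) * phi β p a b θ with hψ
  have hder : ∀ θ, HasDerivAt ψ _ θ := fun θ =>
    ((((Real.hasDerivAt_sin θ).pow 2).const_mul ((p * β) ^ 2)).div_const 2).exp.mul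
      (phi_deriv β p hβ hp a b θ)
  have hanti : AntitoneOn ψ (Set.Icc 0 (Real.pi / 2)) := by
    refine antitoneOn_of_deriv_nonpos (convex_Icc _ _)
      (fun θ _ => (hder θ).continuousAt.continuousWithinAt)
      (fun θ _ => (hder θ).differentiableAt.differentiableWithinAt) fun θ hθ => ?_
    rw [interior_Icc] at hθ
    have hs : 0 ≤ Real.sin θ * Real.cos θ := mul_nonneg
      (Real.sin_nonneg_of_nonneg_of_le_pi hθ.1.le (by linarith [hθ.2, Real.pi_pos]))
      (Real.cos_nonneg_of_mem_Icc ⟨by linarith [hθ.1, Real.pi_pos], hθ.2.le⟩)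
    have hle : ∑ i, p * β * ∫ w, lin (cth (fun i k => - b i k) a θ i) w *
        Gi β p (fun i => lin (cth a b θ i) w) i ∂(stdG ι) ≤
        -(p * β) ^ 2 * (Real.sin θ * Real.cos θ) * phi β p a b θ := by
      have : phi β p a b θ = ∑ i, ∫ w, Gi β p (fun i => lin (cth a b θ i) w) i ∂(stdG ι) := by
        unfold phi
        rw [← integral_finsetSum]
        · exact integral_congr_ae (Filter.Eventually.of_forall fun w => (sum_Gi _ _ _).symm)
        · exact fun i _ => integrable_of_le_Zs β p hβ hp (cth a b θ) _ (continuous_Gi _ _ _ _)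
            fun w => by rw [abs_of_nonneg (Gi_nonneg _ _ _ _)]; exact Gi_le _ _ _ _
      rw [this, Finset.mul_sum]
      refine Finset.sum_le_sum fun i _ => ?_
      have hst := stein_Gi β p (Real.sin θ * Real.cos θ) hβ hp hp1 hs (cth a b θ)
        (cth (fun i k => - b i k) a θ i) (fun j => lin (a i) (a j) - lin (b i) (b j)) i
        (by
          intro j
          have h1 : lin (cth a b θ j) (cth (fun i k => - b i k) a θ i) =
            ∑ k, (Real.cos θ * b j k + Real.sin θ * a j k) *
              (Real.cos θ * a i k + Real.sin θ * - b i k) := rfl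
          have h2 : ∑ k, (Real.cos θ * b j k + Real.sin θ * a j k) *
              (Real.cos θ * a i k + Real.sin θ * - b i k) =
              Real.cos θ ^ 2 * lin (b j) (a i)
              - Real.sin θ ^ 2 * lin (a j) (b i)
              + Real.sin θ * Real.cos θ * (lin (a i) (a j) - lin (b i) (b j)) := by
            unfold lin
            rw [← Finset.sum_sub_distrib]
            simp only [Finset.mul_sum]
            rw [← Finset.sum_sub_distrib, ← Finset.sum_add_distrib]
            exact Finset.sum_congr rfl fun k _ => by ring
          rw [h1, h2, hab, hba]; ring) (hii i) (hij i)
      refine (mul_le_mul_of_nonneg_left hst (mul_nonneg hp hβ)).trans (le_of_eq ?_)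
      ring
    rw [(hder θ).deriv]
    have h3 := mul_le_mul_of_nonneg_left hle
      (Real.exp_pos ((p * β) ^ 2 * Real.sin θ ^ 2 / 2)).le
    simp only [Pi.pow_apply] at h3 ⊢
    refine (add_le_add_right h3 _).trans (le_of_eq ?_)
    simp
    ring
  have h := hanti (Set.left_mem_Icc.2 (by positivity)) (Set.right_mem_Icc.2 (by positivity))
    (by positivity : (0:ℝ) ≤ Real.pi / 2)
  have e1 : ∀ i, cth a b (Real.pi / 2) i = a i := fun i => by ext k; simp [cth]
  have e2 : ∀ i, cth a b 0 i = b i := fun i => by ext k; simp [cth]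
  simpa [hψ, phi, e1, e2] using h

end cmp

lemma chi_one (lam q : ℝ) (hl : 0 ≤ lam) (hq : 0 < q) :
    Integrable (fun x => Real.exp (lam / (2 * (lam + q)) * x ^ 2)) (gaussianReal 0 1) ∧
    ∫ x, Real.exp (lam / (2 * (lam + q)) * x ^ 2) ∂(gaussianReal 0 1) ≤
      Real.exp (lam / (2 * q)) := by
  have hc : 0 < lam + q := by linarith
  have hb : 0 < q / (2 * (lam + q)) := by positivity
  have hpt : ∀ x : ℝ, gaussianPDFReal 0 1 x * Real.exp (lam / (2 * (lam + q)) * x ^ 2) =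
      (√(2 * Real.pi))⁻¹ * Real.exp (-(q / (2 * (lam + q))) * x ^ 2) := by
    intro x
    simp only [gaussianPDFReal, sub_zero, NNReal.coe_one, mul_one]
    rw [mul_assoc, ← Real.exp_add]
    congr 2
    field_simp
    ring
  constructor
  · rw [gaussianReal_of_var_ne_zero _ one_ne_zero,
      integrable_withDensity_iff (measurable_gaussianPDF 0 1) (by simp [gaussianPDF])]
    simp only [toReal_gaussianPDF]
    refine ((integrable_exp_neg_mul_sq hb).const_mul (√(2 * Real.pi))⁻¹).congr
      (Filter.Eventually.of_forall fun x => ?_)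
    simp only [← hpt]; ring
  · rw [integral_gaussianReal_eq_integral_smul one_ne_zero]
    simp only [smul_eq_mul, hpt]
    rw [integral_const_mul, integral_gaussian, ← Real.sqrt_inv, ← Real.sqrt_mul (by positivity)]
    have : (2 * Real.pi)⁻¹ * (Real.pi / (q / (2 * (lam + q)))) = lam / q + 1 := by
      field_simp
    rw [this, Real.sqrt_le_left (Real.exp_pos _).le, ← Real.exp_nat_mul]
    refine (Real.add_one_le_exp _).trans (le_of_eq ?_)
    congr 1
    push_cast; field_simp

abbrev Ix (l d : ℕ) := (Fin l × Fin d) ⊕ (Fin l ⊕ Fin d)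

def av {l d : ℕ} (u : Fin l → ℝ) (v : Fin d → ℝ) : Ix l d → ℝ
  | .inl q => u q.1 * v q.2
  | .inr _ => 0

def bv {l d : ℕ} (u : Fin l → ℝ) (v : Fin d → ℝ) : Ix l d → ℝ
  | .inl _ => 0
  | .inr (.inl r) => u r
  | .inr (.inr s) => v s

lemma lin_av {l d : ℕ} (u : Fin l → ℝ) (v : Fin d → ℝ) (w : Ix l d → ℝ) :
    lin (av u v) w = ∑ r, ∑ s, u r * v s * w (.inl (r, s)) := by
  simp [lin, av, Fintype.sum_sum_type, Fintype.sum_prod_type]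

lemma lin_bv {l d : ℕ} (u : Fin l → ℝ) (v : Fin d → ℝ) (w : Ix l d → ℝ) :
    lin (bv u v) w = ∑ r, u r * w (.inr (.inl r)) + ∑ s, v s * w (.inr (.inr s)) := by
  simp [lin, bv, Fintype.sum_sum_type]

lemma dot_le {n : ℕ} (u g : Fin n → ℝ) (hu : ∑ r, u r ^ 2 = 1) (c : ℝ) (hc : 0 < c) :
    ∑ r, u r * g r ≤ c / 2 + ∑ r, 1 / (2 * c) * g r ^ 2 := by
  have : ∑ r, u r * g r ≤ ∑ r, (c / 2 * u r ^ 2 + 1 / (2 * c) * g r ^ 2) := by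
    refine Finset.sum_le_sum fun r _ => ?_
    have h : c / 2 * u r ^ 2 + 1 / (2 * c) * g r ^ 2 - u r * g r = (c * u r - g r) ^ 2 / (2 * c) := by
      field_simp; ring
    have : 0 ≤ (c * u r - g r) ^ 2 / (2 * c) := by positivity
    linarith
  rw [Finset.sum_add_distrib, ← Finset.mul_sum, hu] at this
  linarith

lemma dot_le_one {n : ℕ} (u g : Fin n → ℝ) (hu : ∑ r, u r ^ 2 = 1) (hg : ∑ r, g r ^ 2 = 1) :
    ∑ r, u r * g r ≤ 1 := by
  have := dot_le u g hu 1 one_pos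
  rw [← Finset.mul_sum, hg] at this
  linarith

def sv (l d : ℕ) (x y : ℝ) : Ix l d → ℝ
  | .inl _ => 0
  | .inr (.inl _) => x
  | .inr (.inr _) => y

lemma rhs_bound {l d : ℕ} (hl : 0 < l) (hd : 0 < d) {I : Type} [Fintype I] [Nonempty I]
    (u : I → Fin l → ℝ) (v : I → Fin d → ℝ) (hu : ∀ i, ∑ r, u i r ^ 2 = 1)
    (hv : ∀ i, ∑ r, v i r ^ 2 = 1) (β p t : ℝ) (hβ : 0 ≤ β) (hp : 0 ≤ p) (ht : 0 ≤ t)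
    (hpt : p * β = t) :
    ∫ w, Zs β (fun i => lin (bv (u i) (v i)) w) ^ p ∂(stdG (Ix l d)) ≤
      (Fintype.card I : ℝ) ^ p * Real.exp (t ^ 2 + t * (√l + √d)) := by
  have hl' : 0 < √(l:ℝ) := Real.sqrt_pos.2 (by exact_mod_cast hl)
  have hd' : 0 < √(d:ℝ) := Real.sqrt_pos.2 (by exact_mod_cast hd)
  have hc1 : 0 < t + √(l:ℝ) := by linarith
  have hc2 : 0 < t + √(d:ℝ) := by linarith
  set s : Ix l d → ℝ := sv l d (t / (2 * (t + √l))) (t / (2 * (t + √d))) with hs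
  set E : ℝ := Real.exp (t * ((t + √l) / 2 + (t + √d) / 2)) with hE
  have hpt1 : ∀ w, Zs β (fun i => lin (bv (u i) (v i)) w) ^ p ≤
      (Fintype.card I : ℝ) ^ p * E * ∏ k, Real.exp (s k * w k ^ 2) := by
    intro w
    have hi : ∀ i, lin (bv (u i) (v i)) w ≤ ((t + √l) / 2 + (t + √d) / 2) +
        (∑ r, 1 / (2 * (t + √l)) * w (.inr (.inl r)) ^ 2 +
          ∑ r, 1 / (2 * (t + √d)) * w (.inr (.inr r)) ^ 2) := by
      intro i
      rw [lin_bv]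
      have h1 := dot_le (u i) (fun r => w (.inr (.inl r))) (hu i) _ hc1
      have h2 := dot_le (v i) (fun r => w (.inr (.inr r))) (hv i) _ hc2
      linarith
    set X := ((t + √l) / 2 + (t + √d) / 2) +
        (∑ r, 1 / (2 * (t + √l)) * w (.inr (.inl r)) ^ 2 +
          ∑ r, 1 / (2 * (t + √d)) * w (.inr (.inr r)) ^ 2) with hX
    have h1 : Zs β (fun i => lin (bv (u i) (v i)) w) ≤ (Fintype.card I : ℝ) * Real.exp (β * X) := by
      unfold Zs
      rw [← nsmul_eq_mul, ← Finset.card_univ]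
      refine Finset.sum_le_card_nsmul _ _ _ fun i _ => ?_
      exact Real.exp_le_exp.2 (mul_le_mul_of_nonneg_left (hi i) hβ)
    refine (Real.rpow_le_rpow (Zs_pos _ _).le h1 hp).trans (le_of_eq ?_)
    rw [Real.mul_rpow (by positivity) (Real.exp_pos _).le, ← Real.exp_mul,
      ← Real.exp_sum, hE, mul_assoc (_ ^ p), ← Real.exp_add]
    congr 2
    rw [show β * X * p = t * X by rw [← hpt]; ring, hX, mul_add]
    congr 1
    simp only [hs, sv, Fintype.sum_sum_type, zero_mul, Finset.sum_const_zero, zero_add, mul_add,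
      Finset.mul_sum]
    congr 1
    all_goals exact Finset.sum_congr rfl fun r _ => by ring
  have hone : ∀ k, Integrable (fun x => Real.exp (s k * x ^ 2)) (gaussianReal 0 1) := by
    rintro (q | r | r)
    · simp [hs, sv]
    · exact (chi_one t _ ht hl').1
    · exact (chi_one t _ ht hd').1
  have hint : Integrable (fun w : Ix l d → ℝ => ∏ k, Real.exp (s k * w k ^ 2)) (stdG (Ix l d)) :=
    Integrable.fintype_prod (f := fun k x => Real.exp (s k * x ^ 2)) hone
  have hval : ∫ w : Ix l d → ℝ, ∏ k, Real.exp (s k * w k ^ 2) ∂(stdG (Ix l d)) ≤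
      Real.exp (t * (√l / 2 + √d / 2)) := by
    unfold stdG
    rw [integral_fintype_prod_eq_prod (f := fun k x => Real.exp (s k * x ^ 2)),
      Fintype.prod_sum_type, Fintype.prod_sum_type, mul_add, Real.exp_add]
    have e0 : ∏ q : Fin l × Fin d, ∫ x, Real.exp (s (.inl q) * x ^ 2) ∂(gaussianReal 0 1) = 1 := by
      simp [hs, sv]
    have e1 : ∀ n : ℕ, 0 < n → Real.exp (t / (2 * √n)) ^ n = Real.exp (t * (√n / 2)) := by
      intro n hn
      have hn' : 0 < √(n:ℝ) := Real.sqrt_pos.2 (by exact_mod_cast hn)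
      rw [← Real.exp_nat_mul]
      congr 1
      field_simp
      rw [Real.sq_sqrt (by positivity)]
      ring
    rw [e0, one_mul]
    refine mul_le_mul ?_ ?_ (Finset.prod_nonneg fun _ _ => integral_nonneg fun _ =>
      (Real.exp_pos _).le) (Real.exp_pos _).le
    · rw [← e1 l hl]
      refine (Finset.prod_le_prod (fun _ _ => integral_nonneg fun _ => (Real.exp_pos _).le)
        (fun r _ => (chi_one t _ ht hl').2)).trans (le_of_eq ?_)
      simp
    · rw [← e1 d hd]
      refine (Finset.prod_le_prod (fun _ _ => integral_nonneg fun _ => (Real.exp_pos _).le)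
        (fun r _ => (chi_one t _ ht hd').2)).trans (le_of_eq ?_)
      simp
  refine (integral_mono_of_nonneg (Filter.Eventually.of_forall fun w =>
    Real.rpow_nonneg (Zs_pos _ _).le _) (hint.const_mul _)
    (Filter.Eventually.of_forall hpt1)).trans ?_
  rw [integral_const_mul]
  refine (mul_le_mul_of_nonneg_left hval (by positivity)).trans (le_of_eq ?_)
  rw [mul_assoc, hE, ← Real.exp_add]
  congr 2
  ring

lemma tail {l d : ℕ} (hl : 0 < l) (hd : 0 < d) {I : Type} [Fintype I] [Nonempty I]
    (u : I → Fin l → ℝ) (v : I → Fin d → ℝ) (hu : ∀ i, ∑ r, u i r ^ 2 = 1)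
    (hv : ∀ i, ∑ r, v i r ^ 2 = 1) (t : ℝ) (ht : 0 ≤ t) :
    (stdG (Ix l d)).real {w | ∃ i, √l + √d + t < lin (av (u i) (v i)) w} ≤
      Real.exp (-(t ^ 2 / 2)) := by
  set s := √(l:ℝ) + √(d:ℝ) + t with hs
  have main : ∀ p : ℝ, 0 < p → p ≤ 1 →
      (stdG (Ix l d)).real {w | ∃ i, s < lin (av (u i) (v i)) w} ≤
        (Fintype.card I : ℝ) ^ p * Real.exp (-(t ^ 2 / 2)) := by
    intro p hp hp1
    set β := t / p with hβd
    have hβ : 0 ≤ β := by positivity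
    have hpt : p * β = t := by rw [hβd]; field_simp
    have hcmp := gcompare β p hβ hp.le hp1 (fun i => av (u i) (v i)) (fun i => bv (u i) (v i))
      (fun i j => by rw [lin_av]; simp [bv])
      (fun i => by
        rw [lin_av, lin_bv]
        have h1 : ∑ r, u i r * u i r = 1 := by rw [← hu i]; simp [sq]
        have h2 : ∑ r, v i r * v i r = 1 := by rw [← hv i]; simp [sq]
        have h3 : ∑ r, ∑ s, u i r * v i s * (u i r * v i s) =
            (∑ r, u i r * u i r) * ∑ s, v i s * v i s := by
          rw [Finset.sum_mul_sum]
          exact Finset.sum_congr rfl fun r _ => Finset.sum_congr rfl fun s _ => by ring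
        simp only [av, bv]
        rw [h3, h1, h2]; norm_num)
      (fun i j => by
        rw [lin_av, lin_bv]
        have h1 := dot_le_one (u i) (u j) (hu i) (hu j)
        have h2 := dot_le_one (v i) (v j) (hv i) (hv j)
        have h3 : ∑ r, ∑ s, u i r * v i s * (u j r * v j s) =
            (∑ r, u i r * u j r) * ∑ s, v i s * v j s := by
          rw [Finset.sum_mul_sum]
          exact Finset.sum_congr rfl fun r _ => Finset.sum_congr rfl fun s _ => by ring
        simp only [av, bv]
        rw [h3]
        nlinarith [mul_nonneg (sub_nonneg.2 h1) (sub_nonneg.2 h2)])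
    rw [hpt] at hcmp
    have hr := rhs_bound hl hd u v hu hv β p t hβ hp.le ht hpt
    have hmk := mul_meas_ge_le_integral_of_nonneg (μ := stdG (Ix l d))
      (f := fun w => Zs β (fun i => lin (av (u i) (v i)) w) ^ p)
      (Filter.Eventually.of_forall fun w => Real.rpow_nonneg (Zs_pos _ _).le _)
      (integrable_of_le_Zs β p hβ hp.le (fun i => av (u i) (v i)) _ (continuous_Zs _ _ _) fun w => by
        rw [abs_of_nonneg (Real.rpow_nonneg (Zs_pos _ _).le _)]) (Real.exp (t * s))
    have hsub : (stdG (Ix l d)).real {w | ∃ i, s < lin (av (u i) (v i)) w} ≤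
        (stdG (Ix l d)).real {w | Real.exp (t * s) ≤ Zs β (fun i => lin (av (u i) (v i)) w) ^ p} := by
      refine measureReal_mono ?_
      rintro w ⟨i, hi⟩
      have h1 := exp_le_Zs β (fun i => lin (av (u i) (v i)) w) i
      have h2 := Real.rpow_le_rpow (Real.exp_pos _).le h1 hp.le
      refine le_trans ?_ h2
      rw [← Real.exp_mul]
      refine Real.exp_le_exp.2 ?_
      rw [← hpt]
      have := mul_le_mul_of_nonneg_left hi.le (mul_nonneg hp.le hβ)
      linarith
    set P := (stdG (Ix l d)).real {w | ∃ i, s < lin (av (u i) (v i)) w}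
    have h5 : Real.exp (t ^ 2 / 2) * (Real.exp (t * s) * P) ≤
        (Fintype.card I : ℝ) ^ p * Real.exp (t ^ 2 + t * (√l + √d)) :=
      (mul_le_mul_of_nonneg_left ((mul_le_mul_of_nonneg_left hsub (Real.exp_pos _).le).trans hmk)
        (Real.exp_pos _).le).trans (hcmp.trans hr)
    have h6 : Real.exp (t ^ 2 + t * (√l + √d)) =
        Real.exp (t ^ 2 / 2) * Real.exp (t * s) * Real.exp (-(t ^ 2 / 2)) := by
      rw [← Real.exp_add, ← Real.exp_add]
      congr 1
      rw [hs]; ring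
    rw [h6] at h5
    have h7 : 0 < Real.exp (t ^ 2 / 2) * Real.exp (t * s) := by positivity
    refine le_of_mul_le_mul_left ?_ h7
    linarith
  have hn : (Fintype.card I : ℝ) ≠ 0 := by exact_mod_cast Fintype.card_ne_zero
  have hlim : Filter.Tendsto (fun p : ℝ => (Fintype.card I : ℝ) ^ p * Real.exp (-(t ^ 2 / 2)))
      (nhdsWithin 0 (Set.Ioi 0)) (nhds (1 * Real.exp (-(t ^ 2 / 2)))) := by
    refine Filter.Tendsto.mul_const _ ?_
    have := (Real.continuousAt_const_rpow (b := (0:ℝ)) hn).tendsto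
    rw [Real.rpow_zero] at this
    exact this.mono_left nhdsWithin_le_nhds
  rw [one_mul] at hlim
  refine ge_of_tendsto hlim ?_
  filter_upwards [Ioc_mem_nhdsGT (zero_lt_one' ℝ)] with p hp using main p hp.1 hp.2

lemma map_stdG (l d : ℕ) (hl : 0 < l) :
    (stdG (Ix l d)).map (fun w => fun (r : Fin l) (s : Fin d) => w (.inl (r, s)) / √l) =
      scaledGaussian l d := by
  have h1 : (stdG (Ix l d)).map (fun w => fun q : Fin l × Fin d => w (.inl q)) =
      Measure.pi fun _ : Fin l × Fin d => gaussianReal 0 1 := by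
    have := (measurePreserving_sumPiEquivProdPi (X := fun _ : Ix l d => ℝ)
      (fun _ => gaussianReal 0 1)).map_eq
    have h2 := congrArg (Measure.map Prod.fst) this
    rw [Measure.map_map measurable_fst (MeasurableEquiv.measurable _), Measure.map_fst_prod,
      measure_univ, one_smul] at h2
    exact h2
  have h3 : (Measure.pi fun _ : Fin l × Fin d => gaussianReal 0 1).map
      (fun x q => x q / √l) = Measure.pi fun _ : Fin l × Fin d => gaussianReal 0 (l:ℝ≥0)⁻¹ := by
    rw [Measure.pi_map_pi (f := fun _ x => x / √(l:ℝ)) (fun _ => by fun_prop)]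
    congr 1
    ext1 q
    rw [gaussianReal_map_div_const]
    congr 1
    · simp
    · ext; simp
  have h4 : (Measure.pi fun _ : Fin l × Fin d => gaussianReal 0 (l:ℝ≥0)⁻¹).map
      (MeasurableEquiv.curry (Fin l) (Fin d) ℝ) = scaledGaussian l d := by
    have := Measure.infinitePi_map_curry (fun (_ : Fin l) (_ : Fin d) => gaussianReal 0 (l:ℝ≥0)⁻¹)
    simp only [Measure.infinitePi_eq_pi] at this
    exact this
  rw [← h4, ← h3, ← h1, Measure.map_map (by fun_prop) (by fun_prop),
    Measure.map_map (by fun_prop) (by fun_prop)]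
  rfl

theorem stmt5 (l d : ℕ) (hl : 0 < l) (hd : 0 < d) (δ : ℝ) (hδ : δ ∈ Set.Ioo (0:ℝ) 1) :
    scaledGaussian l d
      {S : Fin l → Fin d → ℝ |
        opNorm (Matrix.of S) ≤ 1 + Real.sqrt ((d:ℝ)/l) + Real.sqrt (2 * Real.log (1/δ) / l)}
      ≥ ENNReal.ofReal (1 - δ) := by
  have hlR : (0:ℝ) < l := by exact_mod_cast hl
  have hl' : 0 < √(l:ℝ) := Real.sqrt_pos.2 hlR
  set C : ℝ := 1 + √((d:ℝ)/l) + √(2 * Real.log (1/δ) / l) with hC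
  have hC0 : 0 < C := by positivity
  have hlog : 0 ≤ Real.log (1 / δ) :=
    Real.log_nonneg (by rw [le_div_iff₀ hδ.1]; linarith [hδ.2])
  set t : ℝ := √(2 * Real.log (1 / δ)) with ht
  have hCs : C * √l = √l + √d + t := by
    rw [hC, Real.sqrt_div (by positivity), Real.sqrt_div (by positivity)]
    field_simp
    rw [ht]
  have hδt : Real.exp (-(t ^ 2 / 2)) = δ := by
    rw [ht, Real.sq_sqrt (by positivity), one_div, Real.log_inv]
    rw [show -(2 * -Real.log δ / 2) = Real.log δ by ring, Real.exp_log hδ.1]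
  let X := {q : (Fin l → ℝ) × (Fin d → ℝ) // ∑ r, q.1 r ^ 2 = 1 ∧ ∑ r, q.2 r ^ 2 = 1}
  have : Nonempty X := by
    refine ⟨⟨(Pi.single ⟨0, hl⟩ 1, Pi.single ⟨0, hd⟩ 1), ?_, ?_⟩⟩ <;>
    simp [Pi.single_apply]
  let x : ℕ → X := TopologicalSpace.denseSeq X
  let f : (Fin l → Fin d → ℝ) → X → ℝ := fun S q => ∑ r, ∑ s, q.1.1 r * q.1.2 s * S r s
  have hfS : ∀ q, Continuous fun S => f S q := fun q => by
    simp only [f]; fun_prop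
  have hfq : ∀ S, Continuous fun q => f S q := fun S => by
    simp only [f]
    fun_prop
  set U : Set (Fin l → Fin d → ℝ) := ⋃ n, {S | C < f S (x n)} with hU
  have hUm : MeasurableSet U :=
    MeasurableSet.iUnion fun n => (isOpen_lt continuous_const (hfS _)).measurableSet
  have hTm : Measurable (fun w : Ix l d → ℝ =>
      fun (r : Fin l) (s : Fin d) => w (.inl (r, s)) / √(l:ℝ)) := by fun_prop
  have hPU : scaledGaussian l d U ≤ ENNReal.ofReal δ := by
    rw [← map_stdG l d hl, Measure.map_apply hTm hUm]
    have hpre : (fun w : Ix l d → ℝ =>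
        fun (r : Fin l) (s : Fin d) => w (.inl (r, s)) / √(l:ℝ)) ⁻¹' U =
        ⋃ N : ℕ, {w | ∃ i : Fin (N + 1), √l + √d + t < lin (av (x i).1.1 (x i).1.2) w} := by
      have hiff : ∀ (w : Ix l d → ℝ) n, C < f (fun r s => w (.inl (r, s)) / √(l:ℝ)) (x n) ↔
          √l + √d + t < lin (av (x n).1.1 (x n).1.2) w := by
        intro w n
        have : f (fun r s => w (.inl (r, s)) / √(l:ℝ)) (x n) =
            lin (av (x n).1.1 (x n).1.2) w / √l := by
          simp only [f, lin_av, Finset.sum_div]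
          exact Finset.sum_congr rfl fun r _ => Finset.sum_congr rfl fun s _ => by ring
        rw [this, lt_div_iff₀ hl', hCs]
      ext w
      simp only [hU, Set.mem_preimage, Set.mem_iUnion, Set.mem_ofPred_eq, hiff]
      constructor
      · rintro ⟨n, hn⟩
        exact ⟨n, ⟨n, Nat.lt_succ_self n⟩, hn⟩
      · rintro ⟨N, i, hi⟩
        exact ⟨i, hi⟩
    rw [hpre, Monotone.measure_iUnion]
    · refine iSup_le fun N => ?_
      have := tail hl hd (I := Fin (N + 1)) (fun i => (x i).1.1) (fun i => (x i).1.2)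
        (fun i => (x i).2.1) (fun i => (x i).2.2) t (Real.sqrt_nonneg _)
      rw [hδt] at this
      rw [← ofReal_measureReal]
      exact ENNReal.ofReal_le_ofReal this
    · intro N M hNM w
      rintro ⟨i, hi⟩
      exact ⟨⟨i, by omega⟩, hi⟩
  have : IsProbabilityMeasure (scaledGaussian l d) := by unfold scaledGaussian; infer_instance
  have hsub : Uᶜ ⊆ {S : Fin l → Fin d → ℝ | opNorm (Matrix.of S) ≤ C} := by
    intro S hS
    by_contra hcon
    apply hS
    simp only [Set.mem_ofPred_eq, not_le] at hcon
    unfold opNorm at hcon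
    obtain ⟨_, ⟨v, hv, rfl⟩, hlt⟩ := exists_lt_of_lt_csSup (by
      refine ⟨_, Pi.single ⟨0, hd⟩ 1, ?_, rfl⟩
      simp [enorm, Pi.single_apply]) hcon
    set y := (Matrix.of S).mulVec v with hy
    set m := enorm y with hm
    have hm0 : 0 < m := hC0.trans hlt
    have hmsq : ∑ r, y r ^ 2 = m ^ 2 := by
      rw [hm, enorm, Real.sq_sqrt (by positivity)]
    have hv1 : ∑ r, v r ^ 2 = 1 := by
      unfold enorm at hv
      rwa [Real.sqrt_eq_one] at hv
    let q : X := ⟨(fun r => y r / m, v), by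
      simp only [div_pow]
      rw [← Finset.sum_div, hmsq, div_self (by positivity)], hv1⟩
    have hq : C < f S q := by
      have : f S q = m := by
        have h1 : f S q = ∑ r, y r / m * y r := by
          simp only [f, q]
          refine Finset.sum_congr rfl fun r _ => ?_
          rw [show y r = ∑ s, S r s * v s from rfl, Finset.mul_sum]
          exact Finset.sum_congr rfl fun s _ => by ring
        have h2 : ∑ r, y r / m * y r = (∑ r, y r ^ 2) / m := by
          rw [Finset.sum_div]
          exact Finset.sum_congr rfl fun r _ => by ring
        rw [h1, h2, hmsq]; field_simp
      rw [this]; exact hlt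
    obtain ⟨n, hn⟩ := (TopologicalSpace.denseRange_denseSeq X).exists_mem_open
      (isOpen_lt continuous_const (hfq S)) ⟨q, hq⟩
    exact Set.mem_iUnion.2 ⟨n, hn⟩
  refine le_trans ?_ (measure_mono hsub)
  rw [prob_compl_eq_one_sub hUm, ENNReal.ofReal_sub _ hδ.1.le, ENNReal.ofReal_one]
  exact tsub_le_tsub_left hPU _

end RARC
end

section
/- Let μ be the law of a scaled Gaussian matrix S ∈ ℝ^{l×d} and let Q ∈ ℝ^{d×d} be an orthogonal matrix (QᵀQ = I). Then the pushforward of μ under the map S ↦ S·Q equals μ; that is, S·Q is again a scaled Gaussian matrix in distribution. -/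
open scoped BigOperators NNReal
open MeasureTheory ProbabilityTheory

namespace RARC

lemma charFun_row {d : ℕ} (v : ℝ≥0) (t : EuclideanSpace ℝ (Fin d)) :
    charFun ((Measure.pi fun _ : Fin d => gaussianReal 0 v).map (WithLp.toLp 2)) t
      = Complex.exp (-((v : ℝ) * ∑ i, t i ^ 2 / 2 : ℝ)) := by
  simp_rw [charFun_pi, charFun_gaussianReal, ← Complex.exp_sum]
  congr 1
  push_cast
  simp only [Finset.mul_sum, ← Finset.sum_neg_distrib]
  refine Finset.sum_congr rfl fun i _ => ?_
  simp
  ring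

lemma row_map {d : ℕ} (v : ℝ≥0) (Q : Matrix (Fin d) (Fin d) ℝ)
    (hQ : Q.transpose * Q = 1) :
    (Measure.pi fun _ : Fin d => gaussianReal 0 v).map (fun x => Matrix.vecMul x Q)
      = Measure.pi fun _ : Fin d => gaussianReal 0 v := by
  have hm : Measurable (fun x : Fin d → ℝ => Matrix.vecMul x Q) :=
    (Continuous.matrix_vecMul continuous_id continuous_const).measurable
  have hL : Measurable (WithLp.toLp 2 : (Fin d → ℝ) → EuclideanSpace ℝ (Fin d)) := by
    fun_prop
  apply (MeasurableEquiv.toLp 2 (Fin d → ℝ)).map_measurableEquiv_injective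
  change Measure.map (WithLp.toLp 2) _ = Measure.map (WithLp.toLp 2) _
  apply Measure.ext_of_charFun
  ext t
  have key : charFun (Measure.map (WithLp.toLp 2 : (Fin d → ℝ) → EuclideanSpace ℝ (Fin d))
      ((Measure.pi fun _ : Fin d => gaussianReal 0 v).map (fun x => Matrix.vecMul x Q))) t
      = charFun ((Measure.pi fun _ : Fin d => gaussianReal 0 v).map (WithLp.toLp 2))
        (WithLp.toLp 2 (Q.mulVec t.ofLp)) := by
    rw [Measure.map_map hL hm, charFun_apply, charFun_apply,
      integral_map (hL.comp hm).aemeasurable (by fun_prop),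
      integral_map hL.aemeasurable (by fun_prop)]
    refine integral_congr_ae (Filter.Eventually.of_forall fun x => ?_)
    have : inner ℝ (WithLp.toLp 2 (Matrix.vecMul x Q)) t
        = inner ℝ (WithLp.toLp 2 x) (WithLp.toLp 2 (Q.mulVec t.ofLp)) := by
      have h := Matrix.dotProduct_mulVec x Q t.ofLp
      simp only [EuclideanSpace.inner_eq_star_dotProduct, star_trivial]
      rw [dotProduct_comm, ← h, dotProduct_comm]
    simp only [Function.comp_apply, this]
  rw [key, charFun_row, charFun_row]
  have h2 : ∑ i, (Q.mulVec t.ofLp) i ^ 2 = ∑ i, t i ^ 2 := by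
    have : Q.mulVec t.ofLp ⬝ᵥ Q.mulVec t.ofLp = t.ofLp ⬝ᵥ t.ofLp := by
      rw [Matrix.dotProduct_mulVec, ← Matrix.mulVec_transpose, Matrix.mulVec_mulVec, hQ,
        Matrix.one_mulVec]
    simpa [dotProduct, sq] using this
  simp only [← Finset.sum_div, h2]

theorem stmt8 (l d : ℕ) (hl : 0 < l) (Q : Matrix (Fin d) (Fin d) ℝ)
    (hQ : Q.transpose * Q = 1) :
    (scaledGaussian l d).map
        (fun S => Matrix.of.symm (Matrix.of S * Q)) = scaledGaussian l d := by
  unfold scaledGaussian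
  have hm : Measurable (fun x : Fin d → ℝ => Matrix.vecMul x Q) :=
    (Continuous.matrix_vecMul continuous_id continuous_const).measurable
  have hr := row_map (l : ℝ≥0)⁻¹ Q hQ
  have : (fun S : Fin l → Fin d → ℝ => Matrix.of.symm (Matrix.of S * Q))
      = fun S i => Matrix.vecMul (S i) Q := by
    funext S i j
    rfl
  rw [this]
  exact (measurePreserving_pi (fun _ : Fin l => Measure.pi fun _ : Fin d => gaussianReal 0 (l : ℝ≥0)⁻¹)
    (fun _ : Fin l => Measure.pi fun _ : Fin d => gaussianReal 0 (l : ℝ≥0)⁻¹)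
    (f := fun _ x => Matrix.vecMul x Q) (fun _ => ⟨hm, hr⟩)).map_eq

end RARC
end

section
/- Let A ∈ ℝ^{d×d} be a symmetric matrix of rank r, and let S ∈ ℝ^{l×d} be a scaled Gaussian matrix with l ≤ d. Let m = min(l, r). Then, with probability 1, rank(S·A·Sᵀ) = m. -/
open scoped BigOperators NNReal
open MeasureTheory ProbabilityTheory

namespace RARC

def Good {E : Type} [NormedAddCommGroup E] [NormedSpace ℝ E] [MeasurableSpace E]
    (μ : Measure E) : Prop :=
  ∀ f : E → ℝ, AnalyticOnNhd ℝ f Set.univ → (∃ x, f x ≠ 0) → ∀ᵐ x ∂μ, f x ≠ 0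

lemma good_gaussian (v : ℝ≥0) (hv : v ≠ 0) : Good (gaussianReal 0 v) := by
  rintro f hf ⟨x, hx⟩
  have h := hf.preimage_zero_mem_codiscrete hx
  have h2 : ∀ᵐ x ∂(volume : Measure ℝ), f x ≠ 0 := by
    have h3 := ae_restrict_le_codiscreteWithin (μ := (volume : Measure ℝ))
      MeasurableSet.univ h
    rw [Measure.restrict_univ] at h3
    exact h3
  exact (gaussianReal_absolutelyContinuous 0 hv).ae_le h2

lemma good_pi {E : Type} [NormedAddCommGroup E] [NormedSpace ℝ E] [MeasurableSpace E]
    [BorelSpace E] [SecondCountableTopology E]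
    (μ : Measure E) [SigmaFinite μ] (h : Good μ) (n : ℕ) :
    Good (Measure.pi fun _ : Fin n => μ) := by
  induction n with
  | zero =>
    rintro f hf ⟨x, hx⟩
    filter_upwards with y
    rwa [Subsingleton.elim y x]
  | succ n ih =>
    rintro f hf ⟨x, hx⟩
    have hc : Continuous f := continuous_iff_continuousAt.2 fun y => (hf y trivial).continuousAt
    have mp := (measurePreserving_piFinSuccAbove (fun _ : Fin (n+1) => μ) 0).symm
    have hm0 : MeasurableSet {y : Fin (n+1) → E | f y ≠ 0} :=
      (measurableSet_eq_fun hc.measurable measurable_const).compl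
    rw [← mp.map_eq, ae_map_iff mp.measurable.aemeasurable hm0]
    have key : ∀ z : E × (Fin n → E),
        (MeasurableEquiv.piFinSuccAbove (fun _ : Fin (n+1) => E) 0).symm z
          = (Fin.cons z.1 z.2 : Fin (n+1) → E) := by
      intro z; simp [MeasurableEquiv.piFinSuccAbove, Fin.insertNthEquiv]
    have han : ∀ y, AnalyticAt ℝ
        (fun z : E × (Fin n → E) => (Fin.cons z.1 z.2 : Fin (n+1) → E)) y := by
      intro y
      rw [analyticAt_pi_iff]
      intro i
      refine Fin.cases ?_ (fun j => ?_) i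
      · simpa using analyticAt_fst
      · simp only [Fin.cons_succ]
        exact ((ContinuousLinearMap.proj (R := ℝ) (φ := fun _ : Fin n => E) j).comp
          (ContinuousLinearMap.snd ℝ E (Fin n → E))).analyticAt y
    have hg : ∀ y, AnalyticAt ℝ
        (fun z : E × (Fin n → E) => f (Fin.cons z.1 z.2 : Fin (n+1) → E)) y := fun y =>
      (hf _ trivial).comp (han y)
    have hgc : Continuous (fun z : E × (Fin n → E) => f (Fin.cons z.1 z.2 : Fin (n+1) → E)) :=
      continuous_iff_continuousAt.2 fun y => (hg y).continuousAt
    simp only [key]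
    have hms : MeasurableSet {z : E × (Fin n → E) | f (Fin.cons z.1 z.2 : Fin (n+1) → E) ≠ 0} :=
      (measurableSet_eq_fun hgc.measurable measurable_const).compl
    refine (Measure.ae_prod_iff_ae_ae hms).2 ?_
    have h1 := h (fun a => f (Fin.cons a (Fin.tail x) : Fin (n+1) → E))
      (fun a _ => (hg (a, Fin.tail x)).comp (f := fun a => (a, Fin.tail x))
        (analyticAt_id.prod analyticAt_const)) ⟨x 0, by simpa using hx⟩
    filter_upwards [h1] with a ha
    exact ih (fun b => f (Fin.cons a b : Fin (n+1) → E))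
      (fun b _ => (hg (a, b)).comp (f := fun b => (a, b))
        (analyticAt_const.prod analyticAt_id)) ⟨Fin.tail x, ha⟩

lemma exists_rows (d m : ℕ) (A : Matrix (Fin d) (Fin d) ℝ) (hA : A.IsSymm) (hm : m ≤ A.rank) :
    ∃ B : Matrix (Fin m) (Fin d) ℝ, (B * A * B.transpose).det ≠ 0 := by
  have hH : A.IsHermitian := by
    rw [Matrix.IsHermitian, Matrix.conjTranspose_eq_transpose_of_trivial]; exact hA
  rw [hH.rank_eq_card_non_zero_eigs] at hm
  obtain ⟨g⟩ : Nonempty (Fin m ↪ {i // hH.eigenvalues i ≠ 0}) :=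
    Function.Embedding.nonempty_of_card_le (by simpa using hm)
  refine ⟨Matrix.of fun i j => hH.eigenvectorBasis (g i) j, ?_⟩
  have : (Matrix.of fun i j => hH.eigenvectorBasis (g i) j) * A *
      (Matrix.of fun i j => hH.eigenvectorBasis (g i) j).transpose
      = Matrix.diagonal fun i : Fin m => hH.eigenvalues (g i) := by
    ext i j
    rw [Matrix.mul_assoc]
    have e : ∀ k, (A * (Matrix.of fun i j => hH.eigenvectorBasis (g i) j).transpose) k j
        = hH.eigenvalues (g j) * hH.eigenvectorBasis (g j) k := fun k => by
      have := congrFun (hH.mulVec_eigenvectorBasis (g j)) k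
      simpa [Matrix.mulVec, dotProduct, Matrix.mul_apply] using this
    rw [Matrix.mul_apply]
    simp only [e, Matrix.of_apply]
    have o := (orthonormal_iff_ite.1 hH.eigenvectorBasis.orthonormal) (g j) (g i)
    simp only [PiLp.inner_apply, RCLike.inner_apply, conj_trivial] at o
    simp only [mul_left_comm _ (hH.eigenvalues (g j).1), ← Finset.mul_sum, o]
    by_cases hij : i = j
    · subst hij; simp
    · have : ¬ ((g j : Fin d) = g i) := fun h => hij (g.injective (Subtype.ext h)).symm
      simp [hij, this]
  rw [this, Matrix.det_diagonal]
  exact Finset.prod_ne_zero_iff.2 fun i _ => (g i).2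

theorem stmt9 (l d r : ℕ) (hl : 0 < l) (hld : l ≤ d)
    (A : Matrix (Fin d) (Fin d) ℝ) (hA : A.IsSymm) (hr : A.rank = r) :
    ∀ᵐ S ∂(scaledGaussian l d),
      (Matrix.of S * A * (Matrix.of S).transpose).rank = min l r := by
  have hv : (l : ℝ≥0)⁻¹ ≠ 0 := by positivity
  have hG : Good (scaledGaussian l d) := good_pi _ (good_pi _ (good_gaussian _ hv) d) l
  set m := min l r with hm
  have hml : m ≤ l := min_le_left _ _
  let c : Fin m → Fin l := Fin.castLE hml
  obtain ⟨B, hB⟩ := exists_rows d m A hA (by rw [hr]; exact min_le_right _ _)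
  have := hG (fun S => ((Matrix.of S * A * (Matrix.of S).transpose).submatrix c c).det) ?_ ?_
  · filter_upwards [this] with S hS
    apply le_antisymm
    · refine le_min ((Matrix.rank_le_height _)) ?_
      rw [← hr]
      exact (Matrix.rank_mul_le_left _ _).trans (Matrix.rank_mul_le_right _ _)
    · have h1 := Matrix.rank_of_isUnit _ ((Matrix.isUnit_iff_isUnit_det _).2 (isUnit_iff_ne_zero.2 hS))
      have h2 := Matrix.rank_submatrix_le (Matrix.of S * A * (Matrix.of S).transpose) c c
      rw [h1] at h2
      simpa using h2
  · intro S _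
    have hent : ∀ i j, AnalyticAt ℝ (fun S : Fin l → Fin d → ℝ => S i j) S := fun i j =>
      ((ContinuousLinearMap.proj (R := ℝ) (φ := fun _ : Fin d => ℝ) j).comp
          (ContinuousLinearMap.proj (R := ℝ) (φ := fun _ : Fin l => Fin d → ℝ) i)).analyticAt S
    simp only [Matrix.det_apply', Matrix.submatrix_apply, Matrix.mul_apply, Matrix.transpose_apply,
      Matrix.of_apply]
    refine Finset.analyticAt_fun_sum _ fun σ _ => analyticAt_const.mul ?_
    refine Finset.analyticAt_fun_prod _ fun i _ => ?_
    refine Finset.analyticAt_fun_sum _ fun k _ => AnalyticAt.mul ?_ (hent _ _)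
    exact Finset.analyticAt_fun_sum _ fun k _ => (hent _ _).mul analyticAt_const
  · refine ⟨fun i j => if h : (i : ℕ) < m then B ⟨i, h⟩ j else 0, ?_⟩
    convert hB using 2
    ext i j
    simp [Matrix.mul_apply, c]

end RARC
end

section
/- Let C, D be natural numbers with C ≥ 1 and D ≥ 1. Let (l_k)_{k≥0} and (r_k)_{k≥0} be sequences of natural numbers with l₀ ≥ 1, set r̂_k = min(l_k, r_k) and R̂_k = max_{0 ≤ j ≤ k} r̂_j, and suppose the update rule holds for every k ≥ 0: l_{k+1} = max( C·R̂_k + D, l_k ) if k = 0 or R̂_k > R̂_{k−1}, and l_{k+1} = l_k otherwise. Then for every k ≥ 1 such that l_k < C·r_k + D, one has R̂_k > R̂_{k−1}. -/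
theorem stmt17 (C D : ℕ) (hC : 1 ≤ C) (hD : 1 ≤ D)
    (l r rhat Rhat : ℕ → ℕ) (hl0 : 1 ≤ l 0)
    (hrhat : ∀ k, rhat k = min (l k) (r k))
    (hRhat : ∀ k, Rhat k = (Finset.range (k+1)).sup rhat)
    (hupdate : ∀ k, l (k+1) =
      if k = 0 ∨ Rhat (k-1) < Rhat k then max (C * Rhat k + D) (l k) else l k) :
    ∀ k, 1 ≤ k → l k < C * r k + D → Rhat (k-1) < Rhat k := by
  have hS : ∀ k, Rhat (k+1) = max (Rhat k) (rhat (k+1)) := by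
    intro k
    rw [hRhat (k+1), hRhat k, Finset.range_add_one (n := k+1), Finset.sup_insert, sup_comm]
  have hinv : ∀ k, C * Rhat k + D ≤ l (k+1) := by
    intro k
    induction k with
    | zero => rw [hupdate 0]; simp
    | succ k ih =>
      rw [hupdate (k+1)]
      by_cases h : k + 1 = 0 ∨ Rhat (k + 1 - 1) < Rhat (k + 1)
      · rw [if_pos h]
        exact le_max_left _ _
      · rw [if_neg h]
        have h1 : Rhat (k+1) ≤ Rhat k := by
          by_contra hc
          exact h (Or.inr (by simpa using hc))
        have h2 := Nat.mul_le_mul_left C h1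
        omega
  intro k hk hlt
  obtain ⟨m, rfl⟩ : ∃ m, k = m + 1 := ⟨k - 1, by omega⟩
  have h1 := hinv m
  have h2 : Rhat m < r (m+1) := Nat.lt_of_mul_lt_mul_left (a := C) (by omega)
  have h3 : Rhat m ≤ C * Rhat m := Nat.le_mul_of_pos_left _ hC
  have h4 := hS m
  have h5 := hrhat (m+1)
  simp only [Nat.add_sub_cancel]
  omega
end
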